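/- arXiv:1201.4075 — 2 statements merged into one kernel-verified Lean document; each statement's English description precedes it below -/
import Mathlib

section
/- Let a > 0 and b ∈ ℝ. Then there exists an entire function f of exponential type that is frequently hypercyclic for T₁ on H(ℂ) and whose indicator function satisfies h_f(θ) ≤ −b·sin(θ) + a·|sin(θ)| for all θ ∈ [−π, π]. -/
open Filter Complex

/-- Support function `H_K(z) = sup { Re (z·u) : u ∈ K }` of a set `K ⊆ ℂ`. -/
noncomputable def suppFn (K : Set ℂ) (z : ℂ) : ℝ :=
  sSup ((fun u => (z * u).re) '' K)

/-- The norm `‖f‖_{K,n} = sup_z |f z| · exp (−H_K z − |z|/n)`. -/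
noncomputable def expNorm (K : Set ℂ) (n : ℕ) (f : ℂ → ℂ) : ℝ :=
  sSup (Set.range fun z : ℂ => ‖f z‖ * Real.exp (-(suppFn K z) - ‖z‖ / n))

/-- Membership in `Exp(K)`: `f` is entire and all the norms `‖f‖_{K,n}` are finite. -/
def MemExp (K : Set ℂ) (f : ℂ → ℂ) : Prop :=
  Differentiable ℂ f ∧ ∀ n : ℕ, 0 < n →
    BddAbove (Set.range fun z : ℂ => ‖f z‖ * Real.exp (-(suppFn K z) - ‖z‖ / n))

open scoped Classical in
/-- Lower density of a set of natural numbers. -/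
noncomputable def lowerDensity (A : Set ℕ) : ℝ :=
  liminf (fun N : ℕ =>
    (((Finset.range (N + 1)).filter (fun n => n ∈ A)).card : ℝ) / N) atTop

/-- Lower density of a discrete subset of `ℂ`. -/
noncomputable def ldensC (Λ : Set ℂ) : ℝ :=
  liminf (fun r : ℝ => (Nat.card {z : ℂ // z ∈ Λ ∧ ‖z‖ ≤ r} : ℝ) / r) atTop

/-- `f` is hypercyclic for the translation `T₁` on `Exp(K)`. -/
def HCExp (K : Set ℂ) (f : ℂ → ℂ) : Prop :=
  MemExp K f ∧ ∀ g : ℂ → ℂ, MemExp K g → ∀ n : ℕ, 0 < n → ∀ ε > (0 : ℝ),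
    ∃ k : ℕ, expNorm K n (fun z => f (z + (k : ℂ)) - g z) < ε

/-- `f` is frequently hypercyclic for the translation `T₁` on `Exp(K)`. -/
def FHCExp (K : Set ℂ) (f : ℂ → ℂ) : Prop :=
  MemExp K f ∧ ∀ g : ℂ → ℂ, MemExp K g → ∀ n : ℕ, 0 < n → ∀ ε > (0 : ℝ),
    0 < lowerDensity {k : ℕ | expNorm K n (fun z => f (z + (k : ℂ)) - g z) < ε}

/-- `f` is hypercyclic (Birkhoff-universal) for `T₁` on `H(ℂ)`. -/
def HCEnt (f : ℂ → ℂ) : Prop :=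
  Differentiable ℂ f ∧ ∀ g : ℂ → ℂ, Differentiable ℂ g → ∀ R > (0 : ℝ), ∀ ε > (0 : ℝ),
    ∃ k : ℕ, ∀ z : ℂ, ‖z‖ ≤ R → ‖f (z + (k : ℂ)) - g z‖ < ε

/-- `f` is frequently hypercyclic (frequently Birkhoff-universal) for `T₁` on `H(ℂ)`. -/
def FHCEnt (f : ℂ → ℂ) : Prop :=
  Differentiable ℂ f ∧ ∀ g : ℂ → ℂ, Differentiable ℂ g → ∀ R > (0 : ℝ), ∀ ε > (0 : ℝ),
    0 < lowerDensity {k : ℕ | ∀ z : ℂ, ‖z‖ ≤ R → ‖f (z + (k : ℂ)) - g z‖ < ε}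

/-- `f` is an entire function of (finite) exponential type. -/
def ExpType (f : ℂ → ℂ) : Prop :=
  Differentiable ℂ f ∧ ∃ C τ : ℝ, ∀ z : ℂ, ‖f z‖ ≤ C * Real.exp (τ * ‖z‖)

/-- The indicator function `h_f(θ) = limsup_{r→∞} log |f(r e^{iθ})| / r`. -/
noncomputable def indicatorFn (f : ℂ → ℂ) (θ : ℝ) : ℝ :=
  limsup (fun r : ℝ => Real.log ‖f ((r : ℂ) * Complex.exp (θ * Complex.I))‖ / r) atTop


/-- A bump function: entire, small exponential type, quartic decay. -/
def GoodFn (a : ℝ) (ψ : ℂ → ℂ) : Prop :=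
  Differentiable ℂ ψ ∧ ∃ C : ℝ, ∀ z, ‖ψ z‖ ≤ C * (Real.exp (a / 2 * |z.im|) / (1 + ‖z‖) ^ 4)

lemma norm_sin_le (z : ℂ) : ‖Complex.sin z‖ ≤ Real.exp |z.im| := by
  rw [Complex.sin]
  have h1 : ‖Complex.exp (-z * I)‖ ≤ Real.exp |z.im| := by
    rw [Complex.norm_exp]; apply Real.exp_le_exp.2; simpa using le_abs_self z.im
  have h2 : ‖Complex.exp (z * I)‖ ≤ Real.exp |z.im| := by
    rw [Complex.norm_exp]; apply Real.exp_le_exp.2; simpa using neg_le_abs z.im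
  have := norm_sub_le (Complex.exp (-z * I)) (Complex.exp (z * I))
  simp only [norm_div, norm_mul, Complex.norm_I, Complex.norm_ofNat]
  linarith

lemma le_norm_sin (z : ℂ) : (Real.exp |z.im| - 1) / 2 ≤ ‖Complex.sin z‖ := by
  rw [Complex.sin]
  have h1 : ‖Complex.exp (-z * I)‖ = Real.exp z.im := by
    rw [Complex.norm_exp]; simp
  have h2 : ‖Complex.exp (z * I)‖ = Real.exp (-z.im) := by
    rw [Complex.norm_exp]; simp
  have e1 := norm_sub_norm_le (Complex.exp (-z * I)) (Complex.exp (z * I))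
  have e2 := norm_sub_norm_le (Complex.exp (z * I)) (Complex.exp (-z * I))
  rw [norm_sub_rev] at e2
  rw [h1, h2] at e1 e2
  simp only [norm_div, norm_mul, Complex.norm_I, Complex.norm_ofNat]
  rcases le_total 0 z.im with h | h
  · rw [abs_of_nonneg h]
    have : Real.exp (-z.im) ≤ 1 := Real.exp_le_one_iff.2 (by linarith)
    linarith
  · rw [abs_of_nonpos h]
    have : Real.exp (z.im) ≤ 1 := Real.exp_le_one_iff.2 (by linarith)
    linarith

lemma sinc_exists : ∃ S : ℂ → ℂ, Differentiable ℂ S ∧ S 0 = 1 ∧ (∀ z, z * S z = Complex.sin z) ∧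
    ∃ C : ℝ, 0 < C ∧ ∀ z, ‖S z‖ ≤ C * (Real.exp |z.im| / (1 + ‖z‖)) := by
  have hd : Differentiable ℂ (dslope Complex.sin 0) := by
    rw [← differentiableOn_univ, Complex.differentiableOn_dslope Filter.univ_mem]
    exact Complex.differentiable_sin.differentiableOn
  have hm : ∀ z, z * dslope Complex.sin 0 z = Complex.sin z := by
    intro z
    have := sub_smul_dslope Complex.sin 0 z
    simpa using this
  refine ⟨dslope Complex.sin 0, hd, by simp [dslope_same], hm, ?_⟩
  obtain ⟨M, hM⟩ := (isCompact_closedBall (0 : ℂ) 1).exists_bound_of_continuousOn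
    hd.continuous.continuousOn
  refine ⟨2 + 2 * |M|, by positivity, fun z => ?_⟩
  have he : 1 ≤ Real.exp |z.im| := Real.one_le_exp (abs_nonneg _)
  have hz := norm_nonneg z
  rw [← mul_div_assoc, le_div_iff₀ (by positivity)]
  rcases le_total ‖z‖ 1 with h | h
  · have h1 := (hM z (by simpa using h)).trans (le_abs_self M)
    have := abs_nonneg M
    nlinarith [norm_nonneg (dslope Complex.sin 0 z)]
  · have h1 := norm_sin_le z
    rw [← hm z, norm_mul] at h1
    have := mul_nonneg (abs_nonneg M) (Real.exp_pos |z.im|).le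
    nlinarith [norm_nonneg (dslope Complex.sin 0 z)]

lemma entire_mem_closure (a : ℝ) (ha : 0 < a) (g : C(ℂ, ℂ)) (hg : Differentiable ℂ g) :
    g ∈ closure {ψ : C(ℂ, ℂ) | GoodFn a ψ} := by
  -- it suffices to treat Taylor polynomials
  set p := cauchyPowerSeries g 0 ((1 : NNReal) : ℝ) with hp
  have hps : HasFPowerSeriesOnBall g p 0 ⊤ := hg.hasFPowerSeriesOnBall 0 one_pos
  have hcont : ∀ n, Continuous (p.partialSum n) := fun n => p.partialSum_continuous n
  set P : ℕ → C(ℂ, ℂ) := fun n => ⟨p.partialSum n, hcont n⟩ with hP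
  have hlim : Tendsto P atTop (nhds g) := by
    rw [ContinuousMap.tendsto_iff_tendstoLocallyUniformly, ← tendstoLocallyUniformlyOn_univ]
    have := hps.tendstoLocallyUniformlyOn
    simp only [Metric.eball_top, zero_add] at this
    exact this
  suffices h : ∀ n, P n ∈ closure {ψ : C(ℂ, ℂ) | GoodFn a ψ} by
    have := mem_closure_of_tendsto hlim (Eventually.of_forall h)
    rwa [closure_closure] at this
  intro n
  obtain ⟨S, hS, hS0, -, C, hC, hSb⟩ := sinc_exists
  have hPs : ∀ z, p.partialSum n z = ∑ k ∈ Finset.range n, p.coeff k * z ^ k := by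
    intro z
    simp [FormalMultilinearSeries.partialSum, mul_comm]
  have hPb : ∃ D : ℝ, 0 ≤ D ∧ ∀ z, ‖p.partialSum n z‖ ≤ D * (1 + ‖z‖) ^ n := by
    refine ⟨∑ k ∈ Finset.range n, ‖p.coeff k‖, by positivity, fun z => ?_⟩
    rw [hPs, Finset.sum_mul]
    refine (norm_sum_le _ _).trans (Finset.sum_le_sum fun k hk => ?_)
    rw [norm_mul, norm_pow]
    gcongr
    have hz := norm_nonneg z
    calc ‖z‖ ^ k ≤ (1 + ‖z‖) ^ k := by gcongr; linarith
      _ ≤ (1 + ‖z‖) ^ n := pow_le_pow_right₀ (by linarith) (Finset.mem_range.1 hk).le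
  have hPd : Differentiable ℂ (p.partialSum n) := by
    have : p.partialSum n = fun z => ∑ k ∈ Finset.range n, p.coeff k * z ^ k := funext hPs
    rw [this]; fun_prop
  obtain ⟨D, hD, hPb⟩ := hPb
  have hSc := hS.continuous
  have hc0 := hcont n
  let F : C(ℝ × ℂ, ℂ) := ⟨fun x => p.partialSum n x.2 * S (x.1 * x.2) ^ (n + 4), by fun_prop⟩
  have hF0 : F.curry 0 = P n := by
    ext z; simp [F, hP, hS0]
  rw [← hF0]
  have hT : Tendsto F.curry (nhdsWithin 0 (Set.Ioi 0)) (nhds (F.curry 0)) :=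
    (F.curry.continuous.tendsto 0).mono_left nhdsWithin_le_nhds
  refine mem_closure_of_tendsto hT ?_
  have hev : ∀ᶠ δ : ℝ in nhdsWithin 0 (Set.Ioi 0), δ < min 1 (a / 2 / (n + 4)) :=
    nhdsWithin_le_nhds (Iio_mem_nhds (by positivity))
  filter_upwards [hev, self_mem_nhdsWithin] with δ hδ hδ0
  have hδ0 : 0 < δ := hδ0
  have hδ1 : δ ≤ 1 := (hδ.trans_le (min_le_left _ _)).le
  have hδ2 : (n + 4) * δ ≤ a / 2 := by
    have := (hδ.trans_le (min_le_right _ _)).le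
    rw [le_div_iff₀ (by positivity)] at this
    linarith
  have hfun : ⇑(F.curry δ) = fun z : ℂ => p.partialSum n z * S (δ * z) ^ (n + 4) := by
    ext z; rfl
  refine ⟨?_, D * (C / δ) ^ (n + 4), fun z => ?_⟩
  · rw [hfun]; fun_prop
  · rw [hfun]
    have hz := norm_nonneg z
    have h1 : ‖S (δ * z)‖ ≤ C / δ * (Real.exp (δ * |z.im|) / (1 + ‖z‖)) := by
      refine (hSb _).trans ?_
      have : |((δ : ℂ) * z).im| = δ * |z.im| := by simp [abs_mul, abs_of_pos hδ0]
      rw [this, norm_mul, Complex.norm_real, Real.norm_of_nonneg hδ0.le, div_mul_eq_mul_div,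
        mul_div_assoc]
      refine mul_le_mul_of_nonneg_left ?_ hC.le
      rw [div_div]
      gcongr
      nlinarith
    calc ‖p.partialSum n z * S (δ * z) ^ (n + 4)‖
        ≤ (D * (1 + ‖z‖) ^ n) * (C / δ * (Real.exp (δ * |z.im|) / (1 + ‖z‖))) ^ (n + 4) := by
          rw [norm_mul, norm_pow]
          gcongr
          exact hPb z
      _ = D * (C / δ) ^ (n + 4) * (Real.exp ((n + 4) * δ * |z.im|) / (1 + ‖z‖) ^ 4) := by
          have : Real.exp ((n + 4) * δ * |z.im|) = Real.exp (δ * |z.im|) ^ (n + 4) := by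
            rw [← Real.exp_nat_mul]; congr 1; push_cast; ring
          rw [this, mul_pow (C / δ), div_pow (Real.exp (δ * |z.im|)), pow_add (1 + ‖z‖)]
          field_simp
      _ ≤ _ := by gcongr

lemma seq_exists (a : ℝ) (ha : 0 < a) : ∃ ψ : ℕ → ℂ → ℂ,
    (∀ e, Differentiable ℂ (ψ e)) ∧
    (∀ e z, ‖ψ e z‖ ≤ e * (Real.exp (a / 2 * |z.im|) / (1 + ‖z‖) ^ 4)) ∧
    ∀ g : ℂ → ℂ, Differentiable ℂ g → ∀ R : ℝ, ∀ ε > 0, ∀ M : ℕ, ∃ e, M ≤ e ∧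
      ∀ z, ‖z‖ ≤ R → ‖ψ e z - g z‖ < ε := by
  classical
  have h0 : GoodFn a (0 : C(ℂ, ℂ)) := ⟨differentiable_const 0, 0, by simp⟩
  have : Nonempty {ψ : C(ℂ, ℂ) | GoodFn a ψ} := ⟨⟨0, h0⟩⟩
  set d := TopologicalSpace.denseSeq {ψ : C(ℂ, ℂ) | GoodFn a ψ} with hd
  have hdr : DenseRange d := TopologicalSpace.denseRange_denseSeq _
  have hgood : ∀ n, GoodFn a (d n).1 := fun n => (d n).2
  choose hdiff C hC using hgood
  refine ⟨fun e => if C e.unpair.1 ≤ e then (d e.unpair.1).1 else 0, ?_, ?_, ?_⟩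
  · intro e
    dsimp only
    split_ifs
    · exact hdiff _
    · exact differentiable_const 0
  · intro e z
    dsimp only
    split_ifs with h
    · refine (hC _ z).trans ?_
      gcongr
    · simp only [Pi.zero_apply, norm_zero]; positivity
  · intro g hg R ε hε M
    set G : C(ℂ, ℂ) := ⟨g, hg.continuous⟩ with hG
    have hcl : G ∈ closure {ψ : C(ℂ, ℂ) | GoodFn a ψ} := entire_mem_closure a ha G hg
    have hcl2 : G ∈ closure (Set.range fun n => ((d n).1 : C(ℂ, ℂ))) := by
      have hsub : {ψ : C(ℂ, ℂ) | GoodFn a ψ} ⊆ closure (Set.range fun n => ((d n).1 : C(ℂ, ℂ))) := by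
        intro ψ hψ
        have h1 : (⟨ψ, hψ⟩ : {ψ : C(ℂ, ℂ) | GoodFn a ψ}) ∈ closure (Set.range d) := hdr _
        have h2 := image_closure_subset_closure_image continuous_subtype_val
          (Set.mem_image_of_mem Subtype.val h1)
        rwa [← Set.range_comp] at h2
      have := closure_mono hsub hcl
      rwa [closure_closure] at this
    have hev : ∀ᶠ F : C(ℂ, ℂ) in nhds G, ∀ z ∈ Metric.closedBall (0 : ℂ) R, dist (G z) (F z) < ε := by
      have := (ContinuousMap.tendsto_iff_forall_isCompact_tendstoUniformlyOn (p := nhds G)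
        (F := id) (f := G)).1 tendsto_id _ (isCompact_closedBall (0 : ℂ) R)
      exact Metric.tendstoUniformlyOn_iff.1 this ε hε
    obtain ⟨F, ⟨n, rfl⟩, hF⟩ := ((mem_closure_iff_frequently.1 hcl2).and_eventually hev).exists
    obtain ⟨N, hN⟩ := exists_nat_ge (C n)
    have hle : max M N ≤ Nat.pair n (max M N) := Nat.right_le_pair _ _
    refine ⟨Nat.pair n (max M N), (le_max_left _ _).trans hle, fun z hz => ?_⟩
    have hC' : C n ≤ (Nat.pair n (max M N) : ℕ) :=
      hN.trans (by exact_mod_cast (le_max_right _ _).trans hle)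
    simp only [Nat.unpair_pair, hC', if_true]
    have := hF z (by simpa using hz)
    rwa [dist_comm, dist_eq_norm] at this

lemma positions : ∃ s : ℕ → ℕ, (∀ i, i ≤ s i) ∧ (∀ i, padicValNat 2 i ≤ s i) ∧ (∀ i, s i ≤ 4 * i) ∧
    ∀ i j, i < j → (j - i) + padicValNat 2 i + padicValNat 2 j + s i ≤ s j := by
  have hle : ∀ i, padicValNat 2 i ≤ i := by
    intro i
    rcases Nat.eq_zero_or_pos i with h | h
    · simp [h]
    · have := Nat.le_of_dvd h (pow_padicValNat_dvd (p := 2) (n := i))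
      exact (Nat.lt_two_pow_self.le).trans this
  have hsum : ∀ i, ∑ t ∈ Finset.range (i + 1), padicValNat 2 t = padicValNat 2 i.factorial := by
    intro i
    induction i with
    | zero => simp
    | succ k ih =>
      rw [Finset.sum_range_succ, ih, Nat.factorial_succ,
        padicValNat.mul (Nat.succ_ne_zero k) (Nat.factorial_ne_zero k), add_comm]
  have hsum2 : ∀ i, ∑ t ∈ Finset.range i, padicValNat 2 t ≤ i := by
    intro i
    have h1 := sub_one_mul_padicValNat_factorial (p := 2) i
    have h2 := hsum i
    rw [Finset.sum_range_succ] at h2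
    simp at h1
    omega
  refine ⟨fun i => i + padicValNat 2 i + 2 * ∑ t ∈ Finset.range i, padicValNat 2 t, ?_, ?_, ?_, ?_⟩
  · intro i; dsimp only; omega
  · intro i; dsimp only; omega
  · intro i; have := hle i; have := hsum2 i; dsimp only; omega
  · intro i j hij
    have h1 : ∑ t ∈ Finset.range (i + 1), padicValNat 2 t ≤ ∑ t ∈ Finset.range j, padicValNat 2 t :=
      Finset.sum_le_sum_of_subset (Finset.range_mono hij)
    rw [Finset.sum_range_succ] at h1
    dsimp only
    omega

open scoped Classical in
lemma lowerDensity_pos (A : Set ℕ) (t : ℕ → ℕ) (ht : Function.Injective t) (M : ℕ) (hM : 0 < M)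
    (hA : ∀ q, t q ∈ A) (hle : ∀ q, t q ≤ M * (q + 1)) : 0 < lowerDensity A := by
  have hpos : (0 : ℝ) < 1 / (2 * M) := by positivity
  refine hpos.trans_le ?_
  unfold lowerDensity
  refine le_liminf_of_le ?_ ?_
  · refine IsBoundedUnder.isCoboundedUnder_ge (l := atTop) ⟨2, ?_⟩
    rw [eventually_map]
    filter_upwards [eventually_ge_atTop 1] with N hN
    have hN' : (1 : ℝ) ≤ N := by exact_mod_cast hN
    rw [div_le_iff₀ (by positivity)]
    have := Finset.card_filter_le (Finset.range (N + 1)) (fun n => n ∈ A)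
    rw [Finset.card_range] at this
    have h2 : (((Finset.range (N + 1)).filter (fun n => n ∈ A)).card : ℝ) ≤ N + 1 := by
      exact_mod_cast this
    linarith
  · filter_upwards [eventually_ge_atTop (2 * M)] with N hN
    have hN0 : (0 : ℝ) < N := by exact_mod_cast (by omega : 0 < N)
    have hsub : (Finset.range (N / M)).image t ⊆ (Finset.range (N + 1)).filter (fun n => n ∈ A) := by
      intro k hk
      obtain ⟨q, hq, rfl⟩ := Finset.mem_image.1 hk
      rw [Finset.mem_range] at hq
      refine Finset.mem_filter.2 ⟨?_, hA q⟩
      rw [Finset.mem_range]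
      have h1 : M * (q + 1) ≤ M * (N / M) := Nat.mul_le_mul_left _ hq
      have h2 := Nat.mul_div_le N M
      have := hle q
      omega
    have hc := Finset.card_le_card hsub
    rw [Finset.card_image_of_injective _ ht, Finset.card_range] at hc
    have h3 : N < M * (N / M) + M := by
      have := Nat.div_add_mod N M
      have := Nat.mod_lt N hM
      omega
    have h4 : N ≤ 2 * (M * (N / M)) := by omega
    have h5 : (N : ℝ) ≤ 2 * (M * ((N / M : ℕ) : ℝ)) := by exact_mod_cast h4
    have hc' : ((N / M : ℕ) : ℝ) ≤ (((Finset.range (N + 1)).filter (fun n => n ∈ A)).card : ℝ) := by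
      exact_mod_cast hc
    rw [le_div_iff₀ hN0]
    have hMr : (0 : ℝ) < M := by exact_mod_cast hM
    rw [div_mul_eq_mul_div, one_mul, div_le_iff₀ (by positivity)]
    nlinarith

lemma aux_bound (v L n d x w E : ℝ) (hv : 0 ≤ v) (hL : 0 ≤ L) (hn : 0 ≤ n) (_hx : 0 ≤ x)
    (hw : 0 ≤ w) (hE : 0 ≤ E) (hvd : v ≤ d) (hLd : L ≤ d) (hnd : n ≤ d)
    (h : 1 + d ≤ (1 + x) * (1 + w)) :
    v * (E / (1 + w) ^ 4) ≤ E * (1 + x) ^ 4 / (L + 1) * (1 / (1 + n) ^ 2) := by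
  have h1 : (L + 1) * (1 + n) ^ 2 * v ≤ (1 + d) ^ 4 := by
    have hd1 : 0 ≤ 1 + d := by linarith
    calc (L + 1) * (1 + n) ^ 2 * v ≤ (d + 1) * (1 + d) ^ 2 * (1 + d) := by
          have : 0 ≤ (d + 1) * (1 + d) ^ 2 := mul_nonneg (by linarith) (by positivity)
          have : v ≤ 1 + d := by linarith
          have : 0 ≤ d + 1 := by linarith
          gcongr
      _ = _ := by ring
  have h2 : (1 + d) ^ 4 ≤ ((1 + x) * (1 + w)) ^ 4 := by
    have : 0 ≤ 1 + d := by linarith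
    gcongr
  have h3 := mul_le_mul_of_nonneg_left (h1.trans h2) hE
  rw [div_mul_div_comm, ← mul_div_assoc, div_le_div_iff₀ (by positivity) (by positivity)]
  calc v * E * ((L + 1) * (1 + n) ^ 2) = E * ((L + 1) * (1 + n) ^ 2 * v) := by ring
    _ ≤ _ := h3
    _ = _ := by ring

lemma shifted_sum : ∃ K : ℝ, 0 < K ∧ ∀ i0 : ℕ,
    Summable (fun i : ℕ => 1 / (1 + |(i : ℝ) - i0|) ^ 2) ∧
      ∑' i : ℕ, 1 / (1 + |(i : ℝ) - i0|) ^ 2 ≤ K := by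
  have hZ : Summable (fun n : ℤ => 1 / (1 + |(n : ℝ)|) ^ 2) := by
    have hN : Summable (fun n : ℕ => 1 / (1 + (n : ℝ)) ^ 2) := by
      have := (summable_nat_add_iff 1).2 (Real.summable_one_div_nat_pow.2 (one_lt_two))
      refine this.congr fun n => ?_
      push_cast; rw [add_comm]
    refine Summable.of_nat_of_neg ?_ ?_
    · simpa using hN
    · simpa using hN
  have hinj : ∀ i0 : ℕ, Function.Injective (fun i : ℕ => (i : ℤ) - i0) := by
    intro i0 i j h; simpa using h
  have hfun : ∀ i0 : ℕ, (fun i : ℕ => 1 / (1 + |(i : ℝ) - i0|) ^ 2) =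
      (fun n : ℤ => 1 / (1 + |(n : ℝ)|) ^ 2) ∘ (fun i : ℕ => (i : ℤ) - i0) := by
    intro i0; ext i; simp
  refine ⟨∑' n : ℤ, 1 / (1 + |(n : ℝ)|) ^ 2, ?_, fun i0 => ⟨?_, ?_⟩⟩
  · exact hZ.tsum_pos (fun n => by positivity) 0 (by positivity)
  · rw [hfun]; exact hZ.comp_injective (hinj i0)
  · rw [hfun]; exact tsum_comp_le_tsum_of_inj hZ (fun n => by positivity) (hinj i0)

lemma norm_phase (b : ℝ) (k : ℕ) : ‖Complex.exp (I * b * k)‖ = 1 := by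
  rw [Complex.norm_exp]; simp

lemma main_G (a b : ℝ) (ha : 0 < a) : ∃ G : ℂ → ℂ, Differentiable ℂ G ∧
    (∃ K : ℝ, 0 < K ∧ ∀ z, ‖G z‖ ≤ K * ((1 + ‖z‖) ^ 4 * Real.exp (a / 2 * |z.im|))) ∧
    ∀ g : ℂ → ℂ, Differentiable ℂ g → ∀ R : ℝ, ∀ ε > 0, ∀ M : ℕ,
      ∃ t : ℕ → ℕ, Function.Injective t ∧ ∃ B : ℕ, 0 < B ∧ (∀ q, t q ≤ B * (q + 1)) ∧
        (∀ q, M ≤ t q) ∧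
        ∀ q z, ‖z‖ ≤ R → ‖Complex.exp (I * b * (t q : ℕ)) * G (z + (t q : ℕ)) - g z‖ < ε := by
  classical
  obtain ⟨ψ, hψd, hψb, hψ⟩ := seq_exists a ha
  obtain ⟨s, hs1, hs2, hs3, hs4⟩ := positions
  obtain ⟨K, hK, hsum⟩ := shifted_sum
  set v : ℕ → ℕ := fun i => padicValNat 2 i with hv
  have hsinj : Function.Injective s := by
    have : StrictMono s := fun i j hij => by have := hs4 i j hij; omega
    exact this.injective
  set T : ℕ → ℂ → ℂ := fun i z => Complex.exp (-(I * b * (s i : ℕ))) * ψ (v i) (z - (s i : ℕ))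
    with hT
  have hTn : ∀ i z, ‖T i z‖ = ‖ψ (v i) (z - (s i : ℕ))‖ := by
    intro i z
    rw [hT]
    dsimp only
    rw [norm_mul, Complex.exp_neg, norm_inv, norm_phase, inv_one, one_mul]
  have hTd : ∀ i, Differentiable ℂ (T i) := by
    intro i
    exact ((hψd (v i)).comp (differentiable_id.sub_const _)).const_mul _
  have hTb : ∀ i z, ‖T i z‖ ≤ Real.exp (a / 2 * |z.im|) * (1 + ‖z‖) ^ 4 *
      (1 / (1 + |(i : ℝ) - (0 : ℕ)|) ^ 2) := by
    intro i z
    rw [hTn]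
    refine (hψb _ _).trans ?_
    have him : (z - (s i : ℕ)).im = z.im := by simp
    rw [him]
    have hi : |(i : ℝ) - (0 : ℕ)| = i := by simp
    rw [hi]
    have key := aux_bound (v i) 0 i (s i) ‖z‖ ‖z - (s i : ℕ)‖ (Real.exp (a / 2 * |z.im|))
      (by positivity) le_rfl (by positivity) (by positivity) (by positivity) (by positivity)
      (by exact_mod_cast hs2 i) (by positivity) (by exact_mod_cast hs1 i) ?_
    · simpa using key
    · have h1 : (s i : ℝ) ≤ ‖z‖ + ‖z - (s i : ℕ)‖ := by
        have := norm_sub_le z (z - (s i : ℕ))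
        rw [sub_sub_cancel, Complex.norm_natCast] at this
        exact this
      nlinarith [norm_nonneg z, norm_nonneg (z - (s i : ℕ))]
  have hTs : ∀ z, Summable (fun i => T i z) := fun z =>
    Summable.of_norm_bounded ((hsum 0).1.mul_left _) (fun i => hTb i z)
  refine ⟨fun z => ∑' i, T i z, ?_, ⟨K, hK, ?_⟩, ?_⟩
  · intro z0
    have hz0 : z0 ∈ Metric.ball (0 : ℂ) (‖z0‖ + 1) := by simp
    have := Complex.differentiableOn_tsum_of_summable_norm (F := T)
      (U := Metric.ball (0 : ℂ) (‖z0‖ + 1))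
      (u := fun i => Real.exp (a / 2 * (‖z0‖ + 1)) * (1 + (‖z0‖ + 1)) ^ 4 *
        (1 / (1 + |(i : ℝ) - (0 : ℕ)|) ^ 2)) ((hsum 0).1.mul_left _)
      (fun i => (hTd i).differentiableOn) Metric.isOpen_ball ?_
    · exact this.differentiableAt (Metric.isOpen_ball.mem_nhds hz0)
    · intro i z hz
      have hz : ‖z‖ ≤ ‖z0‖ + 1 := by simpa using (Metric.mem_ball.1 hz).le
      refine (hTb i z).trans ?_
      have := (Complex.abs_im_le_norm z).trans hz
      gcongr
  · intro z
    refine (tsum_of_norm_bounded ((hsum 0).1.mul_left _).hasSum (fun i => hTb i z)).trans ?_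
    rw [tsum_mul_left]
    have := mul_le_mul_of_nonneg_left (hsum 0).2
      (by positivity : 0 ≤ Real.exp (a / 2 * |z.im|) * (1 + ‖z‖) ^ 4)
    refine this.trans (le_of_eq (by ring))
  · intro g hg R ε hε M
    rcases lt_or_ge R 0 with hR | hR
    · refine ⟨fun q => M + q, fun x y h => by simpa using h, M + 1, by omega, fun q => ?_,
        fun q => Nat.le_add_right _ _, fun q z hz => absurd (norm_nonneg z) (by linarith)⟩
      nlinarith
    set Q : ℝ := Real.exp (a / 2 * R) * (1 + R) ^ 4 * K with hQ
    obtain ⟨N, hN⟩ := exists_nat_gt (Q / (ε / 2))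
    obtain ⟨e, heM, he⟩ := hψ g hg R (ε / 2) (by positivity) (max M N)
    have hval : ∀ q, v (2 ^ e * (2 * q + 1)) = e := by
      intro q
      rw [hv]
      dsimp only
      rw [padicValNat.mul (by positivity) (by omega), padicValNat.prime_pow,
        padicValNat.eq_zero_of_not_dvd (by omega), add_zero]
    refine ⟨fun q => s (2 ^ e * (2 * q + 1)), ?_, 2 ^ e * 8, by positivity, ?_, ?_, ?_⟩
    · intro x y h
      have := hsinj h
      have h2 := Nat.eq_of_mul_eq_mul_left (by positivity) this
      omega
    · intro q
      refine (hs3 _).trans ?_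
      nlinarith [Nat.zero_le (2 ^ e), pow_pos (two_pos : (0 : ℕ) < 2) e]
    · intro q
      have h1 := hs2 (2 ^ e * (2 * q + 1))
      have h2 := hval q
      rw [hv] at h2
      dsimp only at h2
      rw [h2] at h1
      exact (le_max_left M N).trans (heM.trans h1)
    · intro q z hz
      dsimp only
      set i0 := 2 ^ e * (2 * q + 1) with hi0
      have hv0 : v i0 = e := hval q
      have hd : ∀ i, i ≠ i0 → |(i : ℝ) - i0| + v i + e ≤ |(s i0 : ℝ) - s i| := by
        intro i hi
        rw [← hv0]
        rcases lt_or_gt_of_ne hi with h | h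
        · have h1 := hs4 i i0 h
          have h2 : (i0 : ℝ) - i + v i + v i0 + s i ≤ s i0 := by
            rw [← Nat.cast_sub h.le]; exact_mod_cast h1
          have h3 : (i : ℝ) < i0 := by exact_mod_cast h
          rw [abs_of_neg (by linarith)]
          refine le_trans ?_ (le_abs_self _)
          linarith
        · have h1 := hs4 i0 i h
          have h2 : (i : ℝ) - i0 + v i0 + v i + s i0 ≤ s i := by
            rw [← Nat.cast_sub h.le]; exact_mod_cast h1
          have h3 : (i0 : ℝ) < i := by exact_mod_cast h
          rw [abs_of_pos (by linarith)]
          refine le_trans ?_ (neg_le_abs _)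
          linarith
      have hTe : ∀ i, ‖if i = i0 then 0 else T i (z + (s i0 : ℕ))‖ ≤
          Real.exp (a / 2 * R) * (1 + R) ^ 4 / (e + 1) * (1 / (1 + |(i : ℝ) - i0|) ^ 2) := by
        intro i
        split_ifs with hi
        · rw [norm_zero]; positivity
        · rw [hTn]
          refine (hψb _ _).trans ?_
          have him : (z + (s i0 : ℕ) - (s i : ℕ)).im = z.im := by simp
          rw [him]
          have hdi := hd i hi
          have hvi : (0 : ℝ) ≤ v i := by positivity
          have he0 : (0 : ℝ) ≤ e := by positivity
          have hab := abs_nonneg ((i : ℝ) - i0)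
          refine (aux_bound (v i) e |(i : ℝ) - i0| |(s i0 : ℝ) - s i| ‖z‖
            ‖z + (s i0 : ℕ) - (s i : ℕ)‖ (Real.exp (a / 2 * |z.im|)) hvi he0 hab
            (norm_nonneg _) (norm_nonneg _) (Real.exp_pos _).le (by linarith) (by linarith)
            (by linarith) ?_).trans ?_
          · have h1 : |(s i0 : ℝ) - s i| ≤ ‖z‖ + ‖z + (s i0 : ℕ) - (s i : ℕ)‖ := by
              have h2 := norm_sub_le (z + (s i0 : ℕ) - (s i : ℕ)) z
              have h3 : (z + (s i0 : ℕ) - (s i : ℕ)) - z = (((s i0 : ℝ) - s i : ℝ) : ℂ) := by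
                push_cast; ring
              rw [h3, Complex.norm_real, Real.norm_eq_abs] at h2
              linarith
            nlinarith [norm_nonneg z, norm_nonneg (z + (s i0 : ℕ) - (s i : ℕ))]
          · have := (Complex.abs_im_le_norm z).trans hz
            gcongr
      have hrest : ‖∑' i, if i = i0 then 0 else T i (z + (s i0 : ℕ))‖ < ε / 2 := by
        refine (tsum_of_norm_bounded ((hsum i0).1.mul_left _).hasSum hTe).trans_lt ?_
        rw [tsum_mul_left]
        have h1 := mul_le_mul_of_nonneg_left (hsum i0).2
          (by positivity : 0 ≤ Real.exp (a / 2 * R) * (1 + R) ^ 4 / (e + 1))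
        refine h1.trans_lt ?_
        have h2 : (N : ℝ) ≤ e := by exact_mod_cast (le_max_right M N).trans heM
        rw [div_mul_eq_mul_div, div_lt_iff₀ (by positivity)]
        rw [div_lt_iff₀ (by positivity)] at hN
        nlinarith
      have hmain : Complex.exp (I * b * (s i0 : ℕ)) * T i0 (z + (s i0 : ℕ)) = ψ e z := by
        rw [hT]
        dsimp only
        rw [hv0, add_sub_cancel_right, ← mul_assoc, ← Complex.exp_add]
        simp
      rw [(hTs (z + (s i0 : ℕ))).tsum_eq_add_tsum_ite i0, mul_add, hmain, add_sub_right_comm]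
      refine (norm_add_le _ _).trans_lt ?_
      rw [norm_mul, norm_phase, one_mul]
      have := he z hz
      linarith

lemma limsup_le_aux (u : ℝ → ℝ) (c : ℝ) (hup : ∀ ε > 0, ∀ᶠ r in atTop, u r ≤ c + ε)
    (hlow : 0 ≤ c ∨ ∃ d, ∀ᶠ r in atTop, d ≤ u r) : limsup u atTop ≤ c := by
  rw [Filter.limsup_eq]
  by_cases hb : BddBelow {x | ∀ᶠ r in atTop, u r ≤ x}
  · refine le_of_forall_pos_le_add fun ε hε => csInf_le hb (hup ε hε)
  · rcases hlow with h | ⟨d, hd⟩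
    · rw [Real.sInf_of_not_bddBelow hb]; exact h
    · refine absurd ⟨d, fun x hx => ?_⟩ hb
      obtain ⟨r, h1, h2⟩ := (hd.and hx).exists
      exact h1.trans h2

theorem stmt8 (a b : ℝ) (ha : 0 < a) :
    ∃ f : ℂ → ℂ, ExpType f ∧ FHCEnt f ∧
      ∀ θ ∈ Set.Icc (-Real.pi) Real.pi,
        indicatorFn f θ ≤ -b * Real.sin θ + a * |Real.sin θ| := by
  obtain ⟨S, hSd, -, hSm, C, hC, hSb⟩ := sinc_exists
  obtain ⟨G, hGd, ⟨K, hK, hGb⟩, hG⟩ := main_G a b ha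
  set f : ℂ → ℂ := fun z => Complex.exp (I * b * z) * (S (a * z) + G z) with hf
  have hfd : Differentiable ℂ f := by rw [hf]; fun_prop
  have hnexp : ∀ z : ℂ, ‖Complex.exp (I * b * z)‖ = Real.exp (-b * z.im) := by
    intro z; rw [Complex.norm_exp]; simp
  have hSa : ∀ z : ℂ, ‖S (a * z)‖ ≤ C * (Real.exp (a * |z.im|) / (1 + a * ‖z‖)) := by
    intro z
    refine (hSb _).trans (le_of_eq ?_)
    have : |((a : ℂ) * z).im| = a * |z.im| := by simp [abs_mul, abs_of_pos ha]
    rw [this, norm_mul, Complex.norm_real, Real.norm_of_nonneg ha.le]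
  set K1 : ℝ := C + K + 1 with hK1
  have hub : ∀ z : ℂ, ‖f z‖ ≤
      K1 * ((1 + ‖z‖) ^ 4 * Real.exp (-b * z.im + a * |z.im|)) := by
    intro z
    have hz := norm_nonneg z
    have hy := abs_nonneg z.im
    have h1 : ‖S (a * z)‖ ≤ C * ((1 + ‖z‖) ^ 4 * Real.exp (a * |z.im|)) := by
      refine (hSa z).trans ?_
      gcongr
      have e1 : Real.exp (a * |z.im|) / (1 + a * ‖z‖) ≤ Real.exp (a * |z.im|) :=
        div_le_self (Real.exp_pos _).le (by nlinarith)
      have e2 : (1 : ℝ) ≤ (1 + ‖z‖) ^ 4 := one_le_pow₀ (by linarith)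
      nlinarith [Real.exp_pos (a * |z.im|)]
    have h2 : ‖G z‖ ≤ K * ((1 + ‖z‖) ^ 4 * Real.exp (a * |z.im|)) := by
      refine (hGb z).trans ?_
      gcongr
      linarith
    have h3 : ‖S (a * z) + G z‖ ≤ K1 * ((1 + ‖z‖) ^ 4 * Real.exp (a * |z.im|)) := by
      have h4 := norm_add_le (S (a * z)) (G z)
      have h5 : 0 < (1 + ‖z‖) ^ 4 * Real.exp (a * |z.im|) := by positivity
      rw [hK1]
      nlinarith
    rw [hf]
    dsimp only
    rw [norm_mul, hnexp, Real.exp_add]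
    calc _ ≤ Real.exp (-b * z.im) * (K1 * ((1 + ‖z‖) ^ 4 * Real.exp (a * |z.im|))) := by gcongr
      _ = _ := by ring
  have hK1p : 1 ≤ K1 := by rw [hK1]; linarith
  refine ⟨f, ⟨hfd, K1, 4 + |b| + a, fun z => ?_⟩, ⟨hfd, ?_⟩, ?_⟩
  · refine (hub z).trans ?_
    have h1 : (1 + ‖z‖) ^ 4 ≤ Real.exp (4 * ‖z‖) := by
      have : Real.exp (4 * ‖z‖) = Real.exp ‖z‖ ^ 4 := by
        rw [← Real.exp_nat_mul]; norm_num
      rw [this]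
      have := Real.add_one_le_exp ‖z‖
      gcongr
      linarith
    have h2 : -b * z.im + a * |z.im| ≤ |b| * ‖z‖ + a * ‖z‖ := by
      have hy := Complex.abs_im_le_norm z
      have : -b * z.im ≤ |b| * |z.im| := by
        rw [← abs_mul, neg_mul]; exact neg_le_abs _
      have h4 := mul_le_mul_of_nonneg_left hy (abs_nonneg b)
      have h5 := mul_le_mul_of_nonneg_left hy ha.le
      linarith
    have h3 : (4 + |b| + a) * ‖z‖ = 4 * ‖z‖ + (|b| * ‖z‖ + a * ‖z‖) := by ring
    rw [h3, Real.exp_add (4 * ‖z‖)]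
    gcongr
  · intro g hg R hR ε hε
    set m : ℝ := Real.exp (|b| * R) with hm
    have hmp : 0 < m := Real.exp_pos _
    set Q : ℝ := C * Real.exp (a * R) with hQ
    have hQp : 0 < Q := by positivity
    set η : ℝ := ε / (2 * m) with hη
    have hηp : 0 < η := by positivity
    obtain ⟨M, hM⟩ := exists_nat_gt (R + Q / η / a)
    obtain ⟨t, htinj, B, hB, htB, htM, hap⟩ := hG (fun z => Complex.exp (-(I * b * z)) * g z)
      (by fun_prop) R η hηp M
    refine lowerDensity_pos _ t htinj B hB (fun q => ?_) htB
    intro z hz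
    have h1 := hap q z hz
    have hk : (M : ℝ) ≤ t q := by exact_mod_cast htM q
    have hS1 : ‖S (a * (z + (t q : ℕ)))‖ < η := by
      refine (hSa _).trans_lt ?_
      have him : (z + (t q : ℕ)).im = z.im := by simp
      rw [him]
      have hw : Q / η / a < ‖z + (t q : ℕ)‖ := by
        have := norm_sub_le (z + (t q : ℕ)) z
        rw [add_sub_cancel_left, Complex.norm_natCast] at this
        linarith
      have hy := (Complex.abs_im_le_norm z).trans hz
      rw [div_lt_iff₀ ha, div_lt_iff₀ hηp] at hw
      have hE : C * Real.exp (a * |z.im|) ≤ Q := by rw [hQ]; gcongr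
      rw [← mul_div_assoc, div_lt_iff₀ (by positivity)]
      nlinarith
    have hE1 : ‖Complex.exp (I * b * z)‖ ≤ m := by
      rw [hnexp, hm]
      apply Real.exp_le_exp.2
      have hy := (Complex.abs_im_le_norm z).trans hz
      have : -b * z.im ≤ |b| * |z.im| := by
        rw [← abs_mul, neg_mul]; exact neg_le_abs _
      exact this.trans (by gcongr)
    have hid : f (z + (t q : ℕ)) - g z = Complex.exp (I * b * z) *
        (Complex.exp (I * b * (t q : ℕ)) * S (a * (z + (t q : ℕ))) +
        (Complex.exp (I * b * (t q : ℕ)) * G (z + (t q : ℕ)) -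
          Complex.exp (-(I * b * z)) * g z)) := by
      have e1 : Complex.exp (I * b * (z + (t q : ℕ))) =
          Complex.exp (I * b * z) * Complex.exp (I * b * (t q : ℕ)) := by
        rw [← Complex.exp_add]; congr 1; ring
      have e2 : Complex.exp (I * b * z) * Complex.exp (-(I * b * z)) = 1 := by
        rw [← Complex.exp_add]; simp
      rw [hf]
      dsimp only
      rw [e1]
      linear_combination g z * e2
    rw [hid, norm_mul]
    have hin : ‖Complex.exp (I * b * (t q : ℕ)) * S (a * (z + (t q : ℕ))) +
        (Complex.exp (I * b * (t q : ℕ)) * G (z + (t q : ℕ)) -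
          Complex.exp (-(I * b * z)) * g z)‖ < η + η := by
      refine (norm_add_le _ _).trans_lt ?_
      rw [norm_mul, norm_phase, one_mul]
      exact add_lt_add hS1 h1
    calc _ ≤ m * _ := mul_le_mul_of_nonneg_right hE1 (norm_nonneg _)
      _ < m * (η + η) := mul_lt_mul_of_pos_left hin hmp
      _ = ε := by rw [hη]; field_simp; ring
  · intro θ _
    set σ := Real.sin θ with hσ
    set c := -b * σ + a * |σ| with hc
    have him : ∀ r : ℝ, ((r : ℂ) * Complex.exp (θ * I)).im = r * σ := by
      intro r; simp [Complex.exp_ofReal_mul_I_im, hσ]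
    have hnm : ∀ r : ℝ, 0 < r → ‖(r : ℂ) * Complex.exp (θ * I)‖ = r := by
      intro r hr
      rw [norm_mul, Complex.norm_exp_ofReal_mul_I, mul_one, Complex.norm_real,
        Real.norm_of_nonneg hr.le]
    have hub2 : ∀ r : ℝ, 0 < r → ‖f ((r : ℂ) * Complex.exp (θ * I))‖ ≤
        K1 * ((1 + r) ^ 4 * Real.exp (c * r)) := by
      intro r hr
      have := hub ((r : ℂ) * Complex.exp (θ * I))
      rw [him, hnm r hr, abs_mul, abs_of_pos hr] at this
      refine this.trans (le_of_eq ?_)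
      rw [hc]; congr 3; ring
    -- lower bound away from the real axis
    have hlow : σ ≠ 0 → ∀ᶠ r : ℝ in atTop,
        Real.exp (-b * σ * r) ≤ ‖f ((r : ℂ) * Complex.exp (θ * I))‖ := by
      intro hσ0
      have hκ : 0 < a / 2 * |σ| := by have := abs_pos.2 hσ0; positivity
      set c5 : ℝ := 1 + 2 * a + 32 * a * K with hc5
      have hc5p : 0 < c5 := by positivity
      have hlo := (isLittleO_pow_exp_pos_mul_atTop 5 hκ).def (inv_pos.2 hc5p)
      filter_upwards [hlo, eventually_ge_atTop 1] with r hr hr1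
      have hr0 : 0 < r := by linarith
      set z := (r : ℂ) * Complex.exp (θ * I) with hz
      set X := Real.exp (a / 2 * |σ| * r) with hX
      rw [Real.norm_of_nonneg (by positivity), Real.norm_of_nonneg (Real.exp_pos _).le,
        ← div_eq_inv_mul, le_div_iff₀ hc5p] at hr
      have hYs : |z.im| = |σ| * r := by rw [him, abs_mul, abs_of_pos hr0, mul_comm]
      have hG1 : ‖G z‖ ≤ K * ((1 + r) ^ 4 * X) := by
        have := hGb z
        rwa [hnm r hr0, hYs, ← mul_assoc (a / 2)] at this
      have hS1 : (X ^ 2 - 1) / 2 ≤ a * r * ‖S (a * z)‖ := by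
        have h1 := le_norm_sin (a * z)
        rw [← hSm, norm_mul, norm_mul, hnm r hr0, Complex.norm_real,
          Real.norm_of_nonneg ha.le] at h1
        have h2 : |((a : ℂ) * z).im| = a * (|σ| * r) := by
          rw [← hYs]; simp [abs_mul, abs_of_pos ha]
        have h3 : X ^ 2 = Real.exp (a * (|σ| * r)) := by
          rw [hX, ← Real.exp_nat_mul]; congr 1; push_cast; ring
        rw [h2, ← h3] at h1
        exact h1
      have hpoly : 1 + 2 * a * r * (1 + K * (1 + r) ^ 4) ≤ X := by
        refine le_trans ?_ hr
        have h1 : (1 + r) ^ 4 ≤ (2 * r) ^ 4 := by gcongr; linarith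
        have h2 : r ≤ r ^ 5 := le_self_pow₀ hr1 (by norm_num)
        calc 1 + 2 * a * r * (1 + K * (1 + r) ^ 4)
            ≤ 1 + 2 * a * r * (1 + K * (2 * r) ^ 4) := by gcongr
          _ = 1 + 2 * a * r + 32 * a * K * r ^ 5 := by ring
          _ ≤ r ^ 5 + 2 * a * r ^ 5 + 32 * a * K * r ^ 5 := by
              gcongr
              exact one_le_pow₀ hr1
          _ = r ^ 5 * c5 := by rw [hc5]; ring
      have hX1 : 1 ≤ X := Real.one_le_exp (by positivity)
      have hbig : 1 + K * ((1 + r) ^ 4 * X) ≤ ‖S (a * z)‖ := by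
        have har : 0 < a * r := by positivity
        have hp : 0 ≤ K * (1 + r) ^ 4 := by positivity
        have h1 : a * r * (1 + K * ((1 + r) ^ 4 * X)) ≤ (X ^ 2 - 1) / 2 := by
          have h2 := mul_le_mul_of_nonneg_right hpoly (by linarith : 0 ≤ X)
          have h3 : a * r * 1 ≤ a * r * X := by gcongr
          nlinarith
        exact le_of_mul_le_mul_left (h1.trans hS1) har
      have hone : 1 ≤ ‖S (a * z) + G z‖ := by
        have := norm_sub_le (S (a * z) + G z) (G z)
        rw [add_sub_cancel_right] at this
        linarith
      rw [hf]
      dsimp only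
      rw [norm_mul, hnexp, him]
      have : -b * σ * r = -b * (r * σ) := by ring
      rw [this]
      exact le_mul_of_one_le_right (Real.exp_pos _).le hone
    have hlim : Tendsto (fun r : ℝ => (Real.log K1 + 4 * Real.log (1 + r)) / r) atTop (nhds 0) := by
      have h1 : Tendsto (fun r : ℝ => Real.log K1 / r) atTop (nhds 0) :=
        tendsto_const_nhds.div_atTop tendsto_id
      have h2 : Tendsto (fun r : ℝ => Real.log (1 + r) / r) atTop (nhds 0) := by
        have h3 : Tendsto (fun r : ℝ => Real.log (1 + r) / (1 + r)) atTop (nhds 0) :=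
          (Real.isLittleO_log_id_atTop.tendsto_div_nhds_zero).comp
            (tendsto_atTop_add_const_left atTop 1 tendsto_id)
        have h4 : Tendsto (fun r : ℝ => (1 + r) / r) atTop (nhds 1) := by
          have h5 : Tendsto (fun r : ℝ => 1 / r + 1) atTop (nhds (0 + 1)) :=
            (tendsto_const_nhds.div_atTop tendsto_id).add_const 1
          rw [zero_add] at h5
          refine h5.congr' ?_
          filter_upwards [eventually_gt_atTop 0] with r hr
          field_simp
        have h6 := h3.mul h4
        rw [zero_mul] at h6
        refine h6.congr' ?_
        filter_upwards [eventually_gt_atTop 0] with r hr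
        field_simp
      have h7 := h1.add (h2.const_mul 4)
      rw [mul_zero, zero_add] at h7
      refine h7.congr fun r => ?_
      ring
    have hK0 : 0 < K1 := by linarith
    have hlogub : ∀ r : ℝ, 0 < r → 0 < ‖f ((r : ℂ) * Complex.exp (θ * I))‖ →
        Real.log ‖f ((r : ℂ) * Complex.exp (θ * I))‖ / r ≤
          c + (Real.log K1 + 4 * Real.log (1 + r)) / r := by
      intro r hr hpos
      have h1 := Real.log_le_log hpos (hub2 r hr)
      rw [Real.log_mul (by positivity) (by positivity),
        Real.log_mul (by positivity) (by positivity), Real.log_pow, Real.log_exp] at h1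
      rw [div_le_iff₀ hr, add_mul, div_mul_cancel₀ _ hr.ne']
      push_cast at h1
      linarith
    refine limsup_le_aux _ _ ?_ ?_
    · intro ε hε
      have hev := hlim.eventually (gt_mem_nhds hε)
      by_cases hσ0 : σ = 0
      · filter_upwards [hev, eventually_gt_atTop 0] with r h1 h2
        rcases (norm_nonneg (f ((r : ℂ) * Complex.exp (θ * I)))).eq_or_lt with h | h
        · rw [← h]
          simp [hc, hσ0, hε.le]
        · have := hlogub r h2 h
          linarith
      · filter_upwards [hev, eventually_gt_atTop 0, hlow hσ0] with r h1 h2 h3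
        have := hlogub r h2 ((Real.exp_pos _).trans_le h3)
        linarith
    · by_cases hσ0 : σ = 0
      · left; simp [hc, hσ0]
      · right
        refine ⟨-b * σ, ?_⟩
        filter_upwards [eventually_gt_atTop 0, hlow hσ0] with r h2 h3
        rw [le_div_iff₀ h2, ← Real.log_exp (-b * σ * r)]
        exact Real.log_le_log (Real.exp_pos _) h3
end

section
/- Let K ⊆ ℂ be a nonempty compact convex set and α ∈ K. Then the set {P·e_α : P a polynomial}, where e_α(z) := e^{αz}, is dense in Exp(K): for every g ∈ Exp(K), every n ∈ ℕ and every ε > 0 there exists a polynomial P with ‖g − P·e_α‖_{K,n} < ε. -/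
open Filter Complex

/-- `f` can be approximated by polynomials in the weighted sup norm with weight `W`. -/
def PolyApprox (W : ℂ → ℝ) (f : ℂ → ℂ) : Prop :=
  ∀ ε : ℝ, 0 < ε → ∃ P : Polynomial ℂ, ∀ z, ‖f z - P.eval z‖ ≤ ε * W z

lemma PolyApprox.poly (W : ℂ → ℝ) (hW : ∀ z, 0 ≤ W z) (P : Polynomial ℂ) :
    PolyApprox W (fun z => P.eval z) := by
  intro ε hε
  refine ⟨P, fun z => ?_⟩
  simpa using mul_nonneg hε.le (hW z)

lemma PolyApprox.add {W : ℂ → ℝ} {f g : ℂ → ℂ} (hf : PolyApprox W f) (hg : PolyApprox W g) :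
    PolyApprox W (fun z => f z + g z) := by
  intro ε hε
  obtain ⟨P, hP⟩ := hf (ε / 2) (by positivity)
  obtain ⟨Q, hQ⟩ := hg (ε / 2) (by positivity)
  refine ⟨P + Q, fun z => ?_⟩
  have h : f z + g z - (P + Q).eval z = (f z - P.eval z) + (g z - Q.eval z) := by
    rw [Polynomial.eval_add]; ring
  rw [h]
  refine (norm_add_le _ _).trans ?_
  linarith [hP z, hQ z]

lemma PolyApprox.const_mul {W : ℂ → ℝ} (hW : ∀ z, 0 ≤ W z) {f : ℂ → ℂ} (hf : PolyApprox W f)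
    (c : ℂ) : PolyApprox W (fun z => c * f z) := by
  intro ε hε
  have hc : 0 < ‖c‖ + 1 := by positivity
  obtain ⟨P, hP⟩ := hf (ε / (‖c‖ + 1)) (by positivity)
  refine ⟨Polynomial.C c * P, fun z => ?_⟩
  have h : c * f z - (Polynomial.C c * P).eval z = c * (f z - P.eval z) := by
    simp; ring
  rw [h, norm_mul]
  calc ‖c‖ * ‖f z - P.eval z‖ ≤ (‖c‖ + 1) * (ε / (‖c‖ + 1) * W z) := by
        gcongr
        · linarith
        · exact hP z
    _ = ε * W z := by field_simp

lemma PolyApprox.sum {W : ℂ → ℝ} (hW : ∀ z, 0 ≤ W z) (F : ℕ → ℂ → ℂ)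
    (hF : ∀ j, PolyApprox W (F j)) (N : ℕ) :
    PolyApprox W (fun z => ∑ j ∈ Finset.range N, F j z) := by
  induction N with
  | zero => simpa using PolyApprox.poly W hW 0
  | succ N ih =>
    simp only [Finset.sum_range_succ]
    exact ih.add (hF N)

/-- Weighted M-test: sums of approximable functions with summable bounds are approximable. -/
lemma PolyApprox.hasSum {W : ℂ → ℝ} (hW : ∀ z, 0 ≤ W z) (F : ℕ → ℂ → ℂ) (f : ℂ → ℂ)
    (hF : ∀ j, PolyApprox W (F j)) (b : ℕ → ℝ) (hb : Summable b)
    (hFb : ∀ j z, ‖F j z‖ ≤ b j * W z) (hs : ∀ z, HasSum (fun j => F j z) (f z)) :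
    PolyApprox W f := by
  intro ε hε
  have ht := tendsto_sum_nat_add b
  obtain ⟨N, hN⟩ := (ht.eventually (gt_mem_nhds (half_pos hε))).exists
  obtain ⟨P, hP⟩ := PolyApprox.sum hW F hF N (ε / 2) (half_pos hε)
  refine ⟨P, fun z => ?_⟩
  have htail : ‖f z - ∑ j ∈ Finset.range N, F j z‖ ≤ (∑' k, b (k + N)) * W z := by
    rw [← (hs z).tsum_eq, ← (hs z).summable.sum_add_tsum_nat_add N, add_sub_cancel_left]
    exact tsum_of_norm_bounded (((summable_nat_add_iff N).2 hb).hasSum.mul_right (W z))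
      (fun i => hFb (i + N) z)
  have h : f z - P.eval z = (f z - ∑ j ∈ Finset.range N, F j z)
      + (∑ j ∈ Finset.range N, F j z - P.eval z) := by ring
  rw [h]
  refine (norm_add_le _ _).trans ?_
  have := hP z
  nlinarith [hW z]

/-- One Taylor step: derivatives of `t ↦ G (t z)` at `t` are approximable if those at `τ` are. -/
lemma polyApprox_step {W : ℂ → ℝ} (hW : ∀ z, 0 ≤ W z) (G : ℂ → ℂ) (hG : Differentiable ℂ G)
    (C ρ : ℝ) (hρ : 0 < ρ) (τ t : ℂ) (ht : ‖t - τ‖ ≤ ρ / 2)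
    (hb : ∀ s z : ℂ, ‖s - τ‖ ≤ ρ → ‖G (s * z)‖ ≤ C * W z)
    (h : ∀ k, PolyApprox W (fun z => iteratedDeriv k (fun s => G (s * z)) τ)) (k : ℕ) :
    PolyApprox W (fun z => iteratedDeriv k (fun s => G (s * z)) t) := by
  have hφ : ∀ z : ℂ, Differentiable ℂ (fun s => G (s * z)) := fun z => by fun_prop
  have hC0 : ∀ z, 0 ≤ C * W z := fun z => (norm_nonneg _).trans (hb τ z (by simpa using hρ.le))
  refine PolyApprox.hasSum hW
    (fun j z => ((j.factorial : ℂ)⁻¹ * (t - τ) ^ j) *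
      iteratedDeriv (j + k) (fun s => G (s * z)) τ) _
    (fun j => (h (j + k)).const_mul hW _)
    (fun j => (((j + k).descFactorial k : ℝ) * (1 / 2 : ℝ) ^ j) * (C / ρ ^ k)) ?_ ?_ ?_
  · exact (summable_descFactorial_mul_geometric_of_norm_lt_one k
      (r := (1 / 2 : ℝ)) (by norm_num)).mul_right _
  · intro j z
    have hc : ‖iteratedDeriv (j + k) (fun s => G (s * z)) τ‖
        ≤ (j + k).factorial * (C * W z) / ρ ^ (j + k) := by
      refine Complex.norm_iteratedDeriv_le_of_forall_mem_sphere_norm_le (j + k) hρ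
        (hφ z).diffContOnCl ?_
      intro s hs
      exact hb s z (by rw [mem_sphere_iff_norm] at hs; exact hs.le)
    have hfac : ((j + k).factorial : ℝ) = j.factorial * (j + k).descFactorial k := by
      have := Nat.factorial_mul_descFactorial (n := j + k) (k := k) (by omega)
      rw [Nat.add_sub_cancel] at this
      exact_mod_cast this.symm
    have hj : (0 : ℝ) < j.factorial := by positivity
    rw [norm_mul, norm_mul, norm_inv, norm_pow, Complex.norm_natCast]
    calc ((j.factorial : ℝ)⁻¹ * ‖t - τ‖ ^ j) * ‖iteratedDeriv (j + k) (fun s => G (s * z)) τ‖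
        ≤ ((j.factorial : ℝ)⁻¹ * (ρ / 2) ^ j) *
          ((j + k).factorial * (C * W z) / ρ ^ (j + k)) := by
          gcongr
      _ = _ := by
          rw [hfac, pow_add, div_pow, div_pow, one_pow]
          field_simp
  · intro z
    have hd : Differentiable ℂ (iteratedDeriv k (fun s => G (s * z))) := by
      have := (hφ z).contDiff (n := ⊤)
      exact this.differentiable_iteratedDeriv k (by simp)
    have hs := Complex.hasSum_taylorSeries_of_entire hd τ t
    have he : (fun j : ℕ => ((j.factorial : ℂ)⁻¹ * (t - τ) ^ j) *
        iteratedDeriv (j + k) (fun s => G (s * z)) τ) =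
        fun j : ℕ => (j.factorial : ℂ)⁻¹ • (t - τ) ^ j •
          iteratedDeriv j (iteratedDeriv k (fun s => G (s * z))) τ := by
      funext j
      rw [iteratedDeriv_eq_iterate, iteratedDeriv_eq_iterate, iteratedDeriv_eq_iterate,
        Function.iterate_add_apply, smul_eq_mul, smul_eq_mul, mul_assoc]
    simp only [he]
    exact hs

lemma polyApprox_main {W : ℂ → ℝ} (hW : ∀ z, 0 ≤ W z) (G : ℂ → ℂ) (hG : Differentiable ℂ G)
    (C ρ : ℝ) (hρ : 0 < ρ)
    (hb : ∀ τ : ℝ, 0 ≤ τ → τ ≤ 1 → ∀ s z : ℂ, ‖s - τ‖ ≤ ρ → ‖G (s * z)‖ ≤ C * W z) :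
    PolyApprox W G := by
  obtain ⟨N, hN⟩ := exists_nat_gt (2 / ρ)
  have hN0 : (0 : ℝ) < N := lt_trans (by positivity) hN
  have key : ∀ i : ℕ, i ≤ N → ∀ k,
      PolyApprox W (fun z => iteratedDeriv k (fun s => G (s * z)) (((i : ℝ) / N : ℝ) : ℂ)) := by
    intro i
    induction i with
    | zero =>
      intro _ k
      have : (fun z : ℂ => iteratedDeriv k (fun s => G (s * z)) (((0 : ℕ) : ℝ) / N : ℝ)) =
          fun z => (Polynomial.C (iteratedDeriv k G 0) * Polynomial.X ^ k).eval z := by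
        funext z
        have h1 : (fun s => G (s * z)) = fun s => G (z * s) := by
          funext s; rw [mul_comm]
        rw [h1, iteratedDeriv_comp_const_mul (hG.contDiff)]
        rw [Polynomial.eval_mul, Polynomial.eval_C, Polynomial.eval_pow, Polynomial.eval_X]
        simp only [Nat.cast_zero, zero_div, Complex.ofReal_zero, mul_zero]
        exact mul_comm _ _
      rw [this]
      exact PolyApprox.poly W hW _
    | succ i ih =>
      intro hi k
      have hi' : (i : ℝ) + 1 ≤ N := by exact_mod_cast hi
      refine polyApprox_step hW G hG C ρ hρ _ _ ?_ (hb ((i : ℝ) / N) (by positivity)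
        (by rw [div_le_one hN0]; linarith)) (ih (by omega)) k
      rw [← Complex.ofReal_sub, Complex.norm_real]
      have : ((i + 1 : ℕ) : ℝ) / N - (i : ℝ) / N = 1 / N := by
        push_cast; field_simp; ring
      rw [this, Real.norm_of_nonneg (by positivity)]
      rw [div_lt_iff₀ hρ] at hN
      rw [div_le_div_iff₀ hN0 (by norm_num)]
      linarith
  have := key N le_rfl 0
  rw [div_self hN0.ne'] at this
  simpa only [iteratedDeriv_zero, Complex.ofReal_one, one_mul] using this

lemma le_suppFn {K : Set ℂ} (hKc : IsCompact K) (z u : ℂ) (hu : u ∈ K) :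
    (z * u).re ≤ suppFn K z := by
  refine le_csSup ?_ ⟨u, hu, rfl⟩
  exact (hKc.image (by fun_prop)).bddAbove

/-- For each `α ∈ K`, the set `{P·e_α : P polynomial}` is dense in `Exp(K)`. -/
theorem stmt12 (K : Set ℂ) (hne : K.Nonempty) (hKc : IsCompact K) (hKconv : Convex ℝ K)
    (α : ℂ) (hα : α ∈ K)
    (g : ℂ → ℂ) (hg : MemExp K g) (n : ℕ) (hn : 0 < n) (ε : ℝ) (hε : 0 < ε) :
    ∃ P : Polynomial ℂ,
      expNorm K n (fun z => g z - P.eval z * Complex.exp (α * z)) < ε := by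
  have hn' : (0 : ℝ) < n := by exact_mod_cast hn
  obtain ⟨C, hC⟩ := hg.2 (4 * n) (by omega)
  have hC' : ∀ z, ‖g z‖ ≤ C * Real.exp (suppFn K z + ‖z‖ / (4 * n)) := by
    intro z
    have := hC ⟨z, rfl⟩
    simp only at this
    rw [show -(suppFn K z) - ‖z‖ / ((4 * n : ℕ) : ℝ) = -(suppFn K z + ‖z‖ / (4 * n)) by
      push_cast; ring, Real.exp_neg, ← div_eq_mul_inv, div_le_iff₀ (Real.exp_pos _)] at this
    exact this
  have hC0 : 0 ≤ C := by
    have h1 := (norm_nonneg _).trans (hC' 0)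
    exact nonneg_of_mul_nonneg_left h1 (Real.exp_pos _)
  obtain ⟨R, hR0, hR⟩ : ∃ R : ℝ, 0 < R ∧ ∀ u ∈ K, ‖u - α‖ ≤ R := by
    obtain ⟨R, hR⟩ := (hKc.image (f := fun u => u - α) (by fun_prop)).isBounded.exists_norm_le
    exact ⟨max R 1, by positivity, fun u hu => (hR _ ⟨u, hu, rfl⟩).trans (le_max_left _ _)⟩
  set W : ℂ → ℝ := fun z => Real.exp (suppFn K z - (α * z).re + ‖z‖ / n) with hWdef
  have hW : ∀ z, 0 ≤ W z := fun z => (Real.exp_pos _).le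
  -- comparison of the support function at `s z` and at `z`
  have hcmp : ∀ τ : ℝ, 0 ≤ τ → τ ≤ 1 → ∀ s z : ℂ,
      suppFn K (s * z) - (α * (s * z)).re ≤
        suppFn K z - (α * z).re + R * ‖s - τ‖ * ‖z‖ := by
    intro τ h0 h1 s z
    have hz0 : 0 ≤ suppFn K z - (α * z).re := by
      have := le_suppFn hKc z α hα
      rw [mul_comm] at this; linarith
    have : suppFn K (s * z) ≤
        suppFn K z - (α * z).re + R * ‖s - τ‖ * ‖z‖ + (α * (s * z)).re := by
      refine csSup_le (hne.image _) ?_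
      rintro _ ⟨u, hu, rfl⟩
      have e : s * z * u = α * (s * z) + ((τ : ℂ) * (z * u - α * z) + (s - τ) * z * (u - α)) := by
        ring
      have hre : ((s - τ) * z * (u - α)).re ≤ R * ‖s - τ‖ * ‖z‖ := by
        refine (Complex.re_le_norm _).trans ?_
        rw [norm_mul, norm_mul]
        have := mul_le_mul_of_nonneg_left (hR u hu)
          (mul_nonneg (norm_nonneg (s - τ)) (norm_nonneg z))
        linarith
      have hu' := le_suppFn hKc z u hu
      simp only
      rw [e, Complex.add_re, Complex.add_re, Complex.re_ofReal_mul, Complex.sub_re]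
      have : τ * ((z * u).re - (α * z).re) ≤ suppFn K z - (α * z).re := by
        calc τ * ((z * u).re - (α * z).re) ≤ τ * (suppFn K z - (α * z).re) := by gcongr
          _ ≤ 1 * (suppFn K z - (α * z).re) := by gcongr
          _ = _ := one_mul _
      linarith
    linarith
  have hmain : PolyApprox W (fun z => g z * Complex.exp (-(α * z))) := by
    refine polyApprox_main hW _ ?_ C (min 1 (1 / (2 * n * R))) (by positivity) ?_
    · have := hg.1
      fun_prop
    · intro τ h0 h1 s z hs
      have hs1 : ‖s - τ‖ ≤ 1 := hs.trans (min_le_left _ _)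
      have hs2 : ‖s - τ‖ ≤ 1 / (2 * n * R) := hs.trans (min_le_right _ _)
      have hs3 : ‖s‖ ≤ 2 := by
        have h2 : ‖(τ : ℂ)‖ ≤ 1 := by
          rw [Complex.norm_real, Real.norm_of_nonneg h0]; exact h1
        calc ‖s‖ = ‖(s - τ) + τ‖ := by rw [sub_add_cancel]
          _ ≤ ‖s - τ‖ + ‖(τ : ℂ)‖ := norm_add_le _ _
          _ ≤ 2 := by linarith
      rw [norm_mul, Complex.norm_exp]
      calc ‖g (s * z)‖ * Real.exp (-(α * (s * z))).re
          ≤ C * Real.exp (suppFn K (s * z) + ‖s * z‖ / (4 * n)) *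
            Real.exp (-(α * (s * z))).re := by gcongr; exact hC' _
        _ = C * Real.exp (suppFn K (s * z) - (α * (s * z)).re + ‖s * z‖ / (4 * n)) := by
            rw [mul_assoc, ← Real.exp_add, Complex.neg_re]; ring_nf
        _ ≤ C * W z := by
            simp only [hWdef]
            refine mul_le_mul_of_nonneg_left (Real.exp_le_exp.2 ?_) hC0
            have a := hcmp τ h0 h1 s z
            have b : R * ‖s - τ‖ * ‖z‖ ≤ ‖z‖ / (2 * n) := by
              calc R * ‖s - τ‖ * ‖z‖ ≤ R * (1 / (2 * n * R)) * ‖z‖ := by gcongr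
                _ = _ := by field_simp
            have c : ‖s * z‖ / (4 * n) ≤ ‖z‖ / (2 * n) := by
              rw [norm_mul]
              calc ‖s‖ * ‖z‖ / (4 * n) ≤ 2 * ‖z‖ / (4 * n) := by gcongr
                _ = _ := by field_simp; ring
            have d : ‖z‖ / (2 * n) + ‖z‖ / (2 * n) = ‖z‖ / n := by field_simp; ring
            linarith
  obtain ⟨P, hP⟩ := hmain (ε / 2) (half_pos hε)
  refine ⟨P, lt_of_le_of_lt (csSup_le (Set.range_nonempty _) ?_) (half_lt_self hε)⟩
  rintro _ ⟨z, rfl⟩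
  have e : g z - P.eval z * Complex.exp (α * z) =
      (g z * Complex.exp (-(α * z)) - P.eval z) * Complex.exp (α * z) := by
    rw [sub_mul, mul_assoc, ← Complex.exp_add]; simp
  simp only
  rw [e, norm_mul, Complex.norm_exp]
  calc ‖g z * Complex.exp (-(α * z)) - P.eval z‖ * Real.exp (α * z).re *
        Real.exp (-(suppFn K z) - ‖z‖ / n)
      ≤ (ε / 2 * W z) * Real.exp (α * z).re * Real.exp (-(suppFn K z) - ‖z‖ / n) := by
        gcongr; exact hP z
    _ = ε / 2 := by
        simp only [hWdef]
        rw [mul_assoc, mul_assoc, ← Real.exp_add, ← Real.exp_add]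
        ring_nf
        simp
end
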